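/- Interaction equivalence ≡int on ordinary λ-terms is a consistent λ-theory (a compatible equivalence containing β-conversion, different from the total relation); moreover it is not extensional (it does not contain η-conversion). -/

import Mathlib

set_option autoImplicit false

/-! ### Players -/

inductive Player : Type
  | white
  | black
deriving DecidableEq

/-- The opposite player. -/
def Player.op : Player → Player
  | .white => .black
  | .black => .white

/-- `gamma p q` is `0` if the players agree (silent) and `1` otherwise (interaction). -/
def Player.gamma (p q : Player) : ℕ := if p = q then 0 else 1

/-! ### Ordinary λ-terms (de Bruijn representation) -/

inductive Lam : Type
  | var : ℕ → Lam
  | lam : Lam → Lam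
  | app : Lam → Lam → Lam
deriving DecidableEq

namespace Lam

/-- Shift the free de Bruijn indices ≥ `d` by one. -/
def liftAt : Lam → ℕ → Lam
  | .var n, d => .var (if n < d then n else n + 1)
  | .lam t, d => .lam (t.liftAt (d + 1))
  | .app t u, d => .app (t.liftAt d) (u.liftAt d)

/-- Capture-avoiding substitution of `u` for the de Bruijn index `x`. -/
def subst : Lam → ℕ → Lam → Lam
  | .var n, x, u => if n = x then u else if x < n then .var (n - 1) else .var n
  | .lam t, x, u => .lam (t.subst (x + 1) (u.liftAt 0))
  | .app t s, x, u => .app (t.subst x u) (s.subst x u)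

end Lam

/-- Root β-rule: `(λx.t) u ↦ t[x:=u]`. -/
inductive LBetaRoot : Lam → Lam → Prop
  | beta (t u : Lam) : LBetaRoot (.app (.lam t) u) (t.subst 0 u)

/-- Root η-rule: `λx. t x ↦ t` with `x ∉ FV(t)` (enforced by the lifting). -/
inductive LEtaRoot : Lam → Lam → Prop
  | eta (t : Lam) : LEtaRoot (.lam (.app (t.liftAt 0) (.var 0))) t

/-- Closure of a root relation under all contexts. -/
inductive LFull (R : Lam → Lam → Prop) : Lam → Lam → Prop
  | root {t u : Lam} : R t u → LFull R t u
  | lam {t u : Lam} : LFull R t u → LFull R (.lam t) (.lam u)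
  | appL {t t' : Lam} (u : Lam) : LFull R t t' → LFull R (.app t u) (.app t' u)
  | appR (t : Lam) {u u' : Lam} : LFull R u u' → LFull R (.app t u) (.app t u')

/-- Closure under applicative spine contexts `⟨·⟩ t1 … tk`. -/
inductive LSpine (R : Lam → Lam → Prop) : Lam → Lam → Prop
  | root {t u : Lam} : R t u → LSpine R t u
  | appL {t t' : Lam} (u : Lam) : LSpine R t t' → LSpine R (.app t u) (.app t' u)

/-- Closure under head contexts `λx1…xn.⟨·⟩ t1 … tk`. -/
inductive LHead (R : Lam → Lam → Prop) : Lam → Lam → Prop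
  | spine {t u : Lam} : LSpine R t u → LHead R t u
  | lam {t u : Lam} : LHead R t u → LHead R (.lam t) (.lam u)

/-- β-reduction. -/
def LBeta : Lam → Lam → Prop := LFull LBetaRoot
/-- η-reduction. -/
def LEta : Lam → Lam → Prop := LFull LEtaRoot
/-- Head reduction. -/
def LHStep : Lam → Lam → Prop := LHead LBetaRoot
/-- Multistep head reduction. -/
def LHSteps : Lam → Lam → Prop := Relation.ReflTransGen LHStep

/-- β-conversion (reflexive-symmetric-transitive closure of β-reduction). -/
def LBetaConv : Lam → Lam → Prop :=
  Relation.ReflTransGen (fun a b => LBeta a b ∨ LBeta b a)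
/-- η-conversion. -/
def LEtaConv : Lam → Lam → Prop :=
  Relation.ReflTransGen (fun a b => LEta a b ∨ LEta b a)

/-- Head normal forms: no head step out of `t`. -/
def Lam.LHNF (t : Lam) : Prop := ∀ u, ¬ LHStep t u

/-- Head convergence: `t ⇓h`. -/
def Lam.HConv (t : Lam) : Prop := ∃ h, LHSteps t h ∧ h.LHNF

/-- Ordinary contexts (one hole). -/
inductive LCtx : Type
  | hole : LCtx
  | lam : LCtx → LCtx
  | appL : LCtx → Lam → LCtx
  | appR : Lam → LCtx → LCtx

/-- Plugging (allowing variable capture). -/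
def LCtx.fill : LCtx → Lam → Lam
  | .hole, t => t
  | .lam C, t => .lam (C.fill t)
  | .appL C u, t => .app (C.fill t) u
  | .appR s C, t => .app s (C.fill t)

/-- Head contextual preorder on λ-terms. -/
def CtxLe (t u : Lam) : Prop := ∀ C : LCtx, (C.fill t).HConv → (C.fill u).HConv

/-! ### Checkers terms -/

inductive CTerm : Type
  | var : ℕ → CTerm
  | lam : Player → CTerm → CTerm
  | app : Player → CTerm → CTerm → CTerm
deriving DecidableEq

namespace CTerm

/-- Shift the free de Bruijn indices ≥ `d` by one. -/
def liftAt : CTerm → ℕ → CTerm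
  | .var n, d => .var (if n < d then n else n + 1)
  | .lam p t, d => .lam p (t.liftAt (d + 1))
  | .app p t u, d => .app p (t.liftAt d) (u.liftAt d)

/-- Capture-avoiding substitution of `u` for the de Bruijn index `x`. -/
def subst : CTerm → ℕ → CTerm → CTerm
  | .var n, x, u => if n = x then u else if x < n then .var (n - 1) else .var n
  | .lam p t, x, u => .lam p (t.subst (x + 1) (u.liftAt 0))
  | .app p t s, x, u => .app p (t.subst x u) (s.subst x u)

/-- The underlying ordinary λ-term of a checkers term. -/
def untag : CTerm → Lam
  | .var n => .var n
  | .lam _ t => .lam t.untag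
  | .app _ t u => .app t.untag u.untag

end CTerm

/-- Player lifting: tag every abstraction and application with player `p`. -/
def Lam.tag : Lam → Player → CTerm
  | .var n, _ => .var n
  | .lam t, p => .lam p (t.tag p)
  | .app t u, p => .app p (t.tag p) (u.tag p)

/-- Silent β root rule: the abstraction and the application carry the same player. -/
inductive SilentRoot : CTerm → CTerm → Prop
  | beta (p : Player) (t u : CTerm) : SilentRoot (.app p (.lam p t) u) (t.subst 0 u)

/-- Interaction β root rule: the application carries the opposite player of the abstraction. -/
inductive InterRoot : CTerm → CTerm → Prop
  | beta (p : Player) (t u : CTerm) : InterRoot (.app p.op (.lam p t) u) (t.subst 0 u)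

/-- Closure of a root relation under all checkers contexts. -/
inductive CFull (R : CTerm → CTerm → Prop) : CTerm → CTerm → Prop
  | root {t u : CTerm} : R t u → CFull R t u
  | lam (p : Player) {t u : CTerm} : CFull R t u → CFull R (.lam p t) (.lam p u)
  | appL (p : Player) {t t' : CTerm} (u : CTerm) : CFull R t t' → CFull R (.app p t u) (.app p t' u)
  | appR (p : Player) (t : CTerm) {u u' : CTerm} : CFull R u u' → CFull R (.app p t u) (.app p t u')

/-- Closure under applicative spine contexts `⟨·⟩ @_{q1} t1 … @_{qk} tk`. -/
inductive CSpine (R : CTerm → CTerm → Prop) : CTerm → CTerm → Prop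
  | root {t u : CTerm} : R t u → CSpine R t u
  | appL (p : Player) {t t' : CTerm} (u : CTerm) : CSpine R t t' → CSpine R (.app p t u) (.app p t' u)

/-- Closure under checkers head contexts `λ_{p1}x1…λ_{pn}xn.⟨·⟩ @_{q1} t1 … @_{qk} tk`. -/
inductive CHead (R : CTerm → CTerm → Prop) : CTerm → CTerm → Prop
  | spine {t u : CTerm} : CSpine R t u → CHead R t u
  | lam (p : Player) {t u : CTerm} : CHead R t u → CHead R (.lam p t) (.lam p u)

/-- Silent β-reduction `→τ`. -/
def StepTau : CTerm → CTerm → Prop := CFull SilentRoot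
/-- Interaction β-reduction `→⊛`. -/
def StepInt : CTerm → CTerm → Prop := CFull InterRoot
/-- Checkers β-reduction `→βch`. -/
def StepBch (t u : CTerm) : Prop := StepTau t u ∨ StepInt t u

/-- Silent head reduction `→hτ`. -/
def HStepTau : CTerm → CTerm → Prop := CHead SilentRoot
/-- Interaction head reduction `→h⊛`. -/
def HStepInt : CTerm → CTerm → Prop := CHead InterRoot
/-- Checkers head reduction `→hch`. -/
def HStepCh (t u : CTerm) : Prop := HStepTau t u ∨ HStepInt t u

/-- Checkers head normal form. -/
def CTerm.HNF (t : CTerm) : Prop := ∀ u, ¬ HStepCh t u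

/-- `BigStep t k` means `t ⇓^k`: the (deterministic) checkers head evaluation of `t`
terminates and performs exactly `k` interaction steps. -/
inductive BigStep : CTerm → ℕ → Prop
  | nf {t : CTerm} : t.HNF → BigStep t 0
  | silent {t u : CTerm} {k : ℕ} : HStepTau t u → BigStep u k → BigStep t k
  | inter {t u : CTerm} {k : ℕ} : HStepInt t u → BigStep u k → BigStep t (k + 1)

/-- `HRed t n i u`: a checkers head reduction sequence from `t` to `u` of length `n`
containing exactly `i` interaction steps. -/
inductive HRed : CTerm → ℕ → ℕ → CTerm → Prop
  | refl (t : CTerm) : HRed t 0 0 t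
  | silent {t u s : CTerm} {n i : ℕ} : HStepTau t u → HRed u n i s → HRed t (n + 1) i s
  | inter {t u s : CTerm} {n i : ℕ} : HStepInt t u → HRed u n i s → HRed t (n + 1) (i + 1) s

/-- Checkers contexts (one hole). -/
inductive CCtx : Type
  | hole : CCtx
  | lam : Player → CCtx → CCtx
  | appL : Player → CCtx → CTerm → CCtx
  | appR : Player → CTerm → CCtx → CCtx

/-- Plugging (allowing variable capture). -/
def CCtx.fill : CCtx → CTerm → CTerm
  | .hole, t => t
  | .lam p C, t => .lam p (C.fill t)
  | .appL p C u, t => .app p (C.fill t) u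
  | .appR p s C, t => .app p s (C.fill t)

/-- Player lifting of ordinary contexts. -/
def LCtx.tag : LCtx → Player → CCtx
  | .hole, _ => .hole
  | .lam C, p => .lam p (C.tag p)
  | .appL C u, p => .appL p (C.tag p) (u.tag p)
  | .appR s C, p => .appR p (s.tag p) (C.tag p)

/-- Checkers interaction preorder `≼ctx⊛` on checkers terms. -/
def IntCtxLe (t u : CTerm) : Prop :=
  ∀ (C : CCtx) (k : ℕ), BigStep (C.fill t) k → BigStep (C.fill u) k

/-- Checkers interaction improvement `≼imp⊛` on checkers terms. -/
def ImpCtxLe (t u : CTerm) : Prop :=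
  ∀ (C : CCtx) (k : ℕ), BigStep (C.fill t) k → ∃ k', k' ≤ k ∧ BigStep (C.fill u) k'

/-- Interaction preorder `⊑int` on ordinary λ-terms, via black lifting. -/
def IntLe (t u : Lam) : Prop := IntCtxLe (t.tag .black) (u.tag .black)

/-- Interaction improvement `⊑int·imp` on ordinary λ-terms, via black lifting. -/
def ImpLe (t u : Lam) : Prop := ImpCtxLe (t.tag .black) (u.tag .black)

/-- Interaction equivalence `≡int`. -/
def IntEq (t u : Lam) : Prop := IntLe t u ∧ IntLe u t

/-- Silent conversion `=τ`: reflexive-symmetric-transitive closure of `→τ`. -/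
def SilentConv : CTerm → CTerm → Prop :=
  Relation.ReflTransGen (fun a b => StepTau a b ∨ StepTau b a)

/-!
The only hard point is that `=τ` is contained in interaction equivalence, i.e. that contracting a
silent redex anywhere in a term changes neither termination of head evaluation nor its number of
interaction steps. Contracting a redex may duplicate or erase others, so one works with *standard*
silent reductions: silent steps on the spine first, then standard reductions in the immediate
subterms. Such a reduction from `t` to `u` is a bisimulation for head reduction. A head step of
`t` is either the first step of the standard reduction, hence silent and free of charge, or it is
matched by a step of `u` of the same cost. Conversely, a head step of `u` is matched by
finitely many silent head steps of `t` followed by a step of the same cost.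

Extensionality fails because `(λ_• y. x @_• y) @_∘ z` performs one interaction step, whereas
`x @_∘ z` is normal.
-/

/-! ### Substitution calculus -/

namespace CTerm

theorem liftAt_liftAt (t : CTerm) {i j : ℕ} (h : i ≤ j) :
    (t.liftAt i).liftAt (j + 1) = (t.liftAt j).liftAt i := by
  induction t generalizing i j with
  | var n => simp only [liftAt]; congr 1; split_ifs <;> omega
  | lam p t ih => simp only [liftAt, ih (Nat.succ_le_succ h)]
  | app p t u iht ihu => simp only [liftAt, iht h, ihu h]

theorem liftAt_subst_of_le (t u : CTerm) {x d : ℕ} (h : x ≤ d) :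
    (t.subst x u).liftAt d = (t.liftAt (d + 1)).subst x (u.liftAt d) := by
  induction t generalizing x d u with
  | var n => grind [subst, liftAt]
  | lam p t ih =>
    simp only [subst, liftAt, ih _ (Nat.succ_le_succ h), liftAt_liftAt u (Nat.zero_le d)]
  | app p t s iht ihs => simp only [subst, liftAt, iht u h, ihs u h]

theorem liftAt_subst_of_ge (t u : CTerm) {x d : ℕ} (h : d ≤ x) :
    (t.subst x u).liftAt d = (t.liftAt d).subst (x + 1) (u.liftAt d) := by
  induction t generalizing x d u with
  | var n => grind [subst, liftAt]
  | lam p t ih =>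
    simp only [subst, liftAt, ih _ (Nat.succ_le_succ h), liftAt_liftAt u (Nat.zero_le d)]
  | app p t s iht ihs => simp only [subst, liftAt, iht u h, ihs u h]

theorem subst_liftAt (t u : CTerm) (d : ℕ) : (t.liftAt d).subst d u = t := by
  induction t generalizing d u with
  | var n => grind [subst, liftAt]
  | lam p t ih => simp only [liftAt, subst, ih]
  | app p t s iht ihs => simp only [liftAt, subst, iht, ihs]

theorem subst_subst (t u v : CTerm) {i j : ℕ} (h : i ≤ j) :
    (t.subst i u).subst j v = (t.subst (j + 1) (v.liftAt i)).subst i (u.subst j v) := by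
  induction t generalizing i j u v with
  | var n => grind [subst, subst_liftAt]
  | lam p t ih =>
    simp only [subst, ih _ _ (Nat.succ_le_succ h), liftAt_liftAt v (Nat.zero_le i),
      liftAt_subst_of_ge u v (Nat.zero_le j)]
  | app p t s iht ihs => simp only [subst, iht u v h, ihs u v h]

end CTerm

namespace Lam

theorem tag_liftAt (t : Lam) (p : Player) (d : ℕ) : (t.liftAt d).tag p = (t.tag p).liftAt d := by
  induction t generalizing d with
  | var n => rfl
  | lam t ih => simp only [liftAt, tag, CTerm.liftAt, ih]
  | app t u iht ihu => simp only [liftAt, tag, CTerm.liftAt, iht, ihu]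

theorem tag_subst (t u : Lam) (p : Player) (x : ℕ) :
    (t.subst x u).tag p = (t.tag p).subst x (u.tag p) := by
  induction t generalizing x u with
  | var n => simp only [subst, tag, CTerm.subst]; split_ifs <;> rfl
  | lam t ih => simp only [subst, tag, CTerm.subst, ih, tag_liftAt]
  | app t s iht ihs => simp only [subst, tag, CTerm.subst, iht, ihs]

end Lam

/-! ### Head reduction graded by cost -/

theorem Player.gamma_eq_zero_iff {p q : Player} : p.gamma q = 0 ↔ p = q := by
  cases p <;> cases q <;> decide

theorem Player.gamma_eq_one_iff {p q : Player} : p.gamma q = 1 ↔ p = q.op := by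
  cases p <;> cases q <;> decide

/-- Checkers β root rule of cost `c`, treating both kinds of β-steps uniformly: silent for
`c = 0`, interaction for `c = 1`, empty for larger `c`. -/
inductive BetaRoot (c : ℕ) : CTerm → CTerm → Prop
  | beta {p q : Player} (t u : CTerm) (h : p.gamma q = c) :
      BetaRoot c (.app p (.lam q t) u) (t.subst 0 u)

/-- A β-step of cost `c` under an applicative spine context (weak head reduction). -/
abbrev SpineStep (c : ℕ) : CTerm → CTerm → Prop := CSpine (BetaRoot c)

/-- A checkers head step of cost `c`. -/
abbrev HeadStep (c : ℕ) : CTerm → CTerm → Prop := CHead (BetaRoot c)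

section HeadReduction

variable {c d k : ℕ} {p : Player} {s t u v : CTerm}

theorem silentRoot_eq_betaRoot : SilentRoot = BetaRoot 0 := by
  ext t u
  constructor
  · rintro ⟨p, t, u⟩
    exact .beta t u (Player.gamma_eq_zero_iff.2 rfl)
  · rintro ⟨t, u, h⟩
    obtain rfl := Player.gamma_eq_zero_iff.1 h
    exact .beta _ t u

theorem interRoot_eq_betaRoot : InterRoot = BetaRoot 1 := by
  ext t u
  constructor
  · rintro ⟨p, t, u⟩
    exact .beta t u (Player.gamma_eq_one_iff.2 rfl)
  · rintro ⟨t, u, h⟩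
    obtain rfl := Player.gamma_eq_one_iff.1 h
    exact .beta _ t u

theorem hStepTau_eq_headStep : HStepTau = HeadStep 0 := congrArg CHead silentRoot_eq_betaRoot

theorem hStepInt_eq_headStep : HStepInt = HeadStep 1 := congrArg CHead interRoot_eq_betaRoot

theorem BetaRoot.cost_eq_zero_or_one (h : BetaRoot c t u) : c = 0 ∨ c = 1 := by
  obtain ⟨t, u, rfl⟩ := h
  exact ite_eq_or_eq _ _ _

theorem CSpine.exists_root {R : CTerm → CTerm → Prop} (h : CSpine R t u) : ∃ a b, R a b := by
  induction h with
  | root h => exact ⟨_, _, h⟩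
  | appL _ _ _ ih => exact ih

theorem CHead.exists_root {R : CTerm → CTerm → Prop} (h : CHead R t u) : ∃ a b, R a b := by
  induction h with
  | spine h => exact h.exists_root
  | lam _ _ ih => exact ih

theorem hStepCh_iff_exists_headStep : HStepCh t u ↔ ∃ c, HeadStep c t u := by
  rw [HStepCh, hStepTau_eq_headStep, hStepInt_eq_headStep]
  refine ⟨fun h => h.elim (⟨0, ·⟩) (⟨1, ·⟩), ?_⟩
  rintro ⟨c, h⟩
  obtain ⟨_, _, hroot⟩ := h.exists_root
  obtain rfl | rfl := hroot.cost_eq_zero_or_one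
  exacts [.inl h, .inr h]

theorem CTerm.hnf_iff_forall_not_headStep : t.HNF ↔ ∀ c u, ¬ HeadStep c t u := by
  simp only [CTerm.HNF, hStepCh_iff_exists_headStep, not_exists]
  exact forall_comm

theorem not_spineStep_lam : ¬ SpineStep c (.lam p t) u := by
  rintro (⟨⟨⟩⟩)

theorem not_spineStep_var {n : ℕ} : ¬ SpineStep c (.var n) u := by
  rintro (⟨⟨⟩⟩)

theorem HeadStep.exists_of_lam (h : HeadStep c (.lam p t) v) :
    ∃ u, v = .lam p u ∧ HeadStep c t u := by
  cases h with
  | spine h => exact absurd h not_spineStep_lam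
  | lam _ h => exact ⟨_, rfl, h⟩

theorem SpineStep.deterministic (h : SpineStep c t u) (h' : SpineStep d t v) :
    c = d ∧ u = v := by
  induction h generalizing v with
  | root h =>
    obtain ⟨t, s, hc⟩ := h
    cases h' with
    | root h' =>
      obtain ⟨_, _, hd⟩ := h'
      exact ⟨hc.symm.trans hd, rfl⟩
    | appL _ _ h' => exact absurd h' not_spineStep_lam
  | appL p s h ih =>
    cases h' with
    | root h' =>
      obtain ⟨_, _, _⟩ := h'
      exact absurd h not_spineStep_lam
    | appL _ _ h' =>
      obtain ⟨hcost, rfl⟩ := ih h'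
      exact ⟨hcost, rfl⟩

theorem HeadStep.deterministic (h : HeadStep c t u) (h' : HeadStep d t v) :
    c = d ∧ u = v := by
  induction h generalizing v with
  | spine h =>
    cases h' with
    | spine h' => exact SpineStep.deterministic h h'
    | lam _ _ => exact absurd h not_spineStep_lam
  | lam p _ ih =>
    obtain ⟨w, rfl, hw⟩ := h'.exists_of_lam
    obtain ⟨hcost, rfl⟩ := ih hw
    exact ⟨hcost, rfl⟩

theorem SpineStep.liftAt (h : SpineStep c t u) (x : ℕ) :
    SpineStep c (t.liftAt x) (u.liftAt x) := by
  induction h with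
  | root h =>
    obtain ⟨t, s, hc⟩ := h
    rw [CTerm.liftAt_subst_of_le t s (Nat.zero_le x)]
    exact .root (.beta _ _ hc)
  | appL p _ _ ih => exact .appL p _ ih

theorem SpineStep.subst (h : SpineStep c t u) (x : ℕ) (v : CTerm) :
    SpineStep c (t.subst x v) (u.subst x v) := by
  induction h with
  | root h =>
    obtain ⟨t, s, hc⟩ := h
    rw [CTerm.subst_subst t s v (Nat.zero_le x)]
    exact .root (.beta _ _ hc)
  | appL p _ _ ih => exact .appL p _ ih

/-- Multistep silent weak head reduction. -/
abbrev SilentSpineSteps : CTerm → CTerm → Prop := Relation.ReflTransGen (SpineStep 0)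

/-- Multistep silent head reduction. -/
abbrev SilentHeadSteps : CTerm → CTerm → Prop := Relation.ReflTransGen (HeadStep 0)

theorem SilentSpineSteps.appL (h : SilentSpineSteps t u) (p : Player) (s : CTerm) :
    SilentSpineSteps (.app p t s) (.app p u s) :=
  h.lift (CTerm.app p · s) fun _ _ => .appL p s

theorem SilentSpineSteps.headSteps (h : SilentSpineSteps t u) : SilentHeadSteps t u :=
  h.lift id fun _ _ => .spine

theorem SilentHeadSteps.lam (h : SilentHeadSteps t u) (p : Player) :
    SilentHeadSteps (.lam p t) (.lam p u) :=
  h.lift (CTerm.lam p) fun _ _ => .lam p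

/-! ### Head normal forms and evaluation -/

/-- Terms `x @_{p₁} t₁ … @_{pₙ} tₙ` headed by a variable: the bodies of head normal forms. -/
inductive Neutral : CTerm → Prop
  | var (n : ℕ) : Neutral (.var n)
  | app (p : Player) {t : CTerm} (u : CTerm) (h : Neutral t) : Neutral (.app p t u)

theorem Neutral.not_spineStep (ht : Neutral t) : ¬ SpineStep c t u := by
  induction ht generalizing u with
  | var n => exact not_spineStep_var
  | app p s ht ih =>
    rintro (⟨⟨⟩⟩ | ⟨_, _, h⟩)
    · cases ht
    · exact ih h

theorem Neutral.hnf (ht : Neutral t) : t.HNF := by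
  rw [CTerm.hnf_iff_forall_not_headStep]
  rintro c u (h | h)
  · exact ht.not_spineStep h
  · cases ht

theorem neutral_app_or_exists_spineStep (p : Player) (t s : CTerm) :
    Neutral (.app p t s) ∨ ∃ c u, SpineStep c (.app p t s) u := by
  induction t generalizing p s with
  | var n => exact .inl (.app p s (.var n))
  | lam q t _ => exact .inr ⟨p.gamma q, _, .root (.beta t s rfl)⟩
  | app q a b iha _ =>
    obtain h | ⟨c, u, h⟩ := iha q b
    · exact .inl (.app p s h)
    · exact .inr ⟨c, _, .appL p s h⟩

theorem CTerm.HNF.neutral_of_app (h : (CTerm.app p t s).HNF) : Neutral (.app p t s) :=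
  (neutral_app_or_exists_spineStep p t s).resolve_right fun ⟨c, u, hu⟩ =>
    CTerm.hnf_iff_forall_not_headStep.1 h c u (.spine hu)

theorem CTerm.hnf_lam_iff : (CTerm.lam p t).HNF ↔ t.HNF := by
  simp only [CTerm.hnf_iff_forall_not_headStep]
  refine ⟨fun h c u hu => h c _ (.lam p hu), fun h c v hv => ?_⟩
  obtain ⟨u, -, hu⟩ := hv.exists_of_lam
  exact h c u hu

theorem BigStep.headStep (h : HeadStep c t u) (hu : BigStep u k) : BigStep t (k + c) := by
  obtain ⟨_, _, hroot⟩ := h.exists_root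
  obtain rfl | rfl := hroot.cost_eq_zero_or_one
  · exact .silent (hStepTau_eq_headStep ▸ h) hu
  · exact .inter (hStepInt_eq_headStep ▸ h) hu

@[elab_as_elim]
theorem BigStep.headStep_induction {motive : (t : CTerm) → (k : ℕ) → BigStep t k → Prop}
    (nf : ∀ {t : CTerm} (h : t.HNF), motive t 0 (.nf h))
    (headStep : ∀ {c k : ℕ} {t u : CTerm} (h : HeadStep c t u) (hu : BigStep u k),
      motive u k hu → motive t (k + c) (hu.headStep h))
    {t : CTerm} {k : ℕ} (h : BigStep t k) : motive t k h := by
  induction h with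
  | nf h => exact nf h
  | silent h hu ih => exact headStep (hStepTau_eq_headStep ▸ h) hu ih
  | inter h hu ih => exact headStep (hStepInt_eq_headStep ▸ h) hu ih

theorem BigStep.silentHeadSteps (h : SilentHeadSteps t u) (hu : BigStep u k) : BigStep t k := by
  induction h using Relation.ReflTransGen.head_induction_on with
  | refl => exact hu
  | head h _ ih => exact ih.headStep h

theorem BigStep.cost_le (h : BigStep t k) (hstep : HeadStep c t u) : c ≤ k := by
  induction h using BigStep.headStep_induction with
  | nf h => exact absurd hstep (CTerm.hnf_iff_forall_not_headStep.1 h c u)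
  | headStep h _ _ => exact (hstep.deterministic h).1.trans_le (Nat.le_add_left _ _)

end HeadReduction

/-! ### Standard silent reduction -/

/-- Standard silent reduction: silent weak head steps, followed by standard silent reductions of
the immediate subterms. The weak head steps are prepended one at a time by `step`. -/
inductive SilentStd : CTerm → CTerm → Prop
  | var (n : ℕ) : SilentStd (.var n) (.var n)
  | lam (p : Player) {t t' : CTerm} (h : SilentStd t t') : SilentStd (.lam p t) (.lam p t')
  | app (p : Player) {t t' u u' : CTerm} (ht : SilentStd t t') (hu : SilentStd u u') :
      SilentStd (.app p t u) (.app p t' u')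
  | step {t s u : CTerm} (h : SpineStep 0 t s) (hs : SilentStd s u) : SilentStd t u

namespace SilentStd

variable {c k : ℕ} {p : Player} {t t' u u' : CTerm}

@[refl]
protected theorem refl (t : CTerm) : SilentStd t t := by
  induction t with
  | var n => exact .var n
  | lam p _ ih => exact .lam p ih
  | app p _ _ iht ihu => exact .app p iht ihu

theorem of_stepTau (h : StepTau t u) : SilentStd t u := by
  induction h with
  | root h => exact .step (.root (silentRoot_eq_betaRoot ▸ h)) (.refl _)
  | lam p _ ih => exact .lam p ih
  | appL p u _ ih => exact .app p ih (.refl u)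
  | appR p t _ ih => exact .app p (.refl t) ih

theorem liftAt (h : SilentStd t u) (x : ℕ) : SilentStd (t.liftAt x) (u.liftAt x) := by
  induction h generalizing x with
  | var n => exact .refl _
  | lam p _ ih => exact .lam p (ih (x + 1))
  | app p _ _ iht ihu => exact .app p (iht x) (ihu x)
  | step h _ ih => exact .step (h.liftAt x) (ih x)

theorem subst (ht : SilentStd t t') (hu : SilentStd u u') (x : ℕ) :
    SilentStd (t.subst x u) (t'.subst x u') := by
  induction ht generalizing x u u' with
  | var n =>
    simp only [CTerm.subst]
    split_ifs
    exacts [hu, .refl _, .refl _]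
  | lam p _ ih => exact .lam p (ih (hu.liftAt 0) (x + 1))
  | app p _ _ iht ihs => exact .app p (iht hu x) (ihs hu x)
  | step h _ ih => exact .step (h.subst x u) (ih hu x)

theorem exists_of_lam_left (h : SilentStd (.lam p t) u) : ∃ t', u = .lam p t' ∧ SilentStd t t' := by
  cases h with
  | lam _ h => exact ⟨_, rfl, h⟩
  | step h _ => exact absurd h not_spineStep_lam

theorem exists_of_lam_right (h : SilentStd t (.lam p u)) :
    ∃ s, SilentSpineSteps t (.lam p s) ∧ SilentStd s u := by
  generalize hv : CTerm.lam p u = v at h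
  induction h with
  | var n => cases hv
  | lam q h =>
    cases hv
    exact ⟨_, .refl, h⟩
  | app q _ _ => cases hv
  | step h _ ih =>
    obtain ⟨s, hsteps, hs⟩ := ih hv
    exact ⟨s, .head h hsteps, hs⟩

theorem spineStep_forward (h : SilentStd t u) (hstep : SpineStep c t t') :
    c = 0 ∧ SilentStd t' u ∨ ∃ u', SpineStep c u u' ∧ SilentStd t' u' := by
  induction h generalizing t' with
  | var n => exact absurd hstep not_spineStep_var
  | lam p _ => exact absurd hstep not_spineStep_lam
  | app p ht hu iht =>
    cases hstep with
    | root hroot =>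
      obtain ⟨a, s, hc⟩ := hroot
      obtain ⟨a', rfl, ha⟩ := ht.exists_of_lam_left
      exact .inr ⟨_, .root (.beta _ _ hc), ha.subst hu 0⟩
    | appL _ _ hstep =>
      obtain ⟨hc, h⟩ | ⟨v, hv, h⟩ := iht hstep
      · exact .inl ⟨hc, .app p h hu⟩
      · exact .inr ⟨_, .appL p _ hv, .app p h hu⟩
  | step h hs _ =>
    obtain ⟨rfl, rfl⟩ := hstep.deterministic h
    exact .inl ⟨rfl, hs⟩

theorem headStep_forward (h : SilentStd t u) (hstep : HeadStep c t t') :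
    c = 0 ∧ SilentStd t' u ∨ ∃ u', HeadStep c u u' ∧ SilentStd t' u' := by
  induction hstep generalizing u with
  | spine hstep =>
    exact (h.spineStep_forward hstep).imp_right fun ⟨u', hu', h'⟩ => ⟨u', .spine hu', h'⟩
  | lam p _ ih =>
    obtain ⟨a, rfl, ha⟩ := h.exists_of_lam_left
    obtain ⟨hc, h'⟩ | ⟨a', ha', h'⟩ := ih ha
    · exact .inl ⟨hc, .lam p h'⟩
    · exact .inr ⟨_, .lam p ha', .lam p h'⟩

theorem spineStep_backward (h : SilentStd t u) (hstep : SpineStep c u u') :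
    ∃ s t', SilentSpineSteps t s ∧ SpineStep c s t' ∧ SilentStd t' u' := by
  induction h generalizing u' with
  | var n => exact absurd hstep not_spineStep_var
  | lam p _ => exact absurd hstep not_spineStep_lam
  | app p ht hu iht =>
    cases hstep with
    | root hroot =>
      obtain ⟨a', _, hc⟩ := hroot
      obtain ⟨a, hsteps, ha⟩ := ht.exists_of_lam_right
      exact ⟨_, _, hsteps.appL p _, .root (.beta _ _ hc), ha.subst hu 0⟩
    | appL _ _ hstep =>
      obtain ⟨s, t', hsteps, hs, h⟩ := iht hstep
      exact ⟨_, _, hsteps.appL p _, .appL p _ hs, .app p h hu⟩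
  | step h _ ih =>
    obtain ⟨s, t', hsteps, hs, h'⟩ := ih hstep
    exact ⟨s, t', .head h hsteps, hs, h'⟩

theorem headStep_backward (h : SilentStd t u) (hstep : HeadStep c u u') :
    ∃ s t', SilentHeadSteps t s ∧ HeadStep c s t' ∧ SilentStd t' u' := by
  induction hstep generalizing t with
  | spine hstep =>
    obtain ⟨s, t', hsteps, hs, h'⟩ := h.spineStep_backward hstep
    exact ⟨s, t', hsteps.headSteps, .spine hs, h'⟩
  | lam p _ ih =>
    obtain ⟨a, hlam, ha⟩ := h.exists_of_lam_right
    obtain ⟨s, t', hsteps, hs, h'⟩ := ih ha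
    exact ⟨_, _, hlam.headSteps.trans (hsteps.lam p), .lam p hs, .lam p h'⟩

theorem hnf_forward (h : SilentStd t u) (ht : t.HNF) : u.HNF := by
  rw [CTerm.hnf_iff_forall_not_headStep] at ht ⊢
  intro c u' hu
  obtain ⟨s, t', hsteps, hs, -⟩ := h.headStep_backward hu
  obtain rfl | ⟨r, hr, -⟩ := hsteps.cases_head
  exacts [ht c t' hs, ht 0 r hr]

theorem neutral_backward (h : SilentStd t u) (hu : Neutral u) :
    ∃ s, SilentSpineSteps t s ∧ Neutral s := by
  induction h with
  | var n => exact ⟨_, .refl, hu⟩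
  | lam p _ => cases hu
  | app p _ _ iht =>
    cases hu with
    | app _ _ hu =>
      obtain ⟨s, hsteps, hs⟩ := iht hu
      exact ⟨_, hsteps.appL p _, .app p _ hs⟩
  | step h _ ih =>
    obtain ⟨s, hsteps, hs⟩ := ih hu
    exact ⟨s, .head h hsteps, hs⟩

theorem hnf_backward (h : SilentStd t u) (hu : u.HNF) : ∃ s, SilentHeadSteps t s ∧ s.HNF := by
  induction h with
  | var n => exact ⟨_, .refl, hu⟩
  | lam p _ ih =>
    obtain ⟨s, hsteps, hs⟩ := ih (CTerm.hnf_lam_iff.1 hu)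
    exact ⟨_, hsteps.lam p, CTerm.hnf_lam_iff.2 hs⟩
  | app p ht hs =>
    obtain ⟨s, hsteps, hs⟩ := (SilentStd.app p ht hs).neutral_backward hu.neutral_of_app
    exact ⟨s, hsteps.headSteps, hs.hnf⟩
  | step h _ ih =>
    obtain ⟨s, hsteps, hs⟩ := ih hu
    exact ⟨s, .head (.spine h) hsteps, hs⟩

theorem bigStep_forward (h : SilentStd t u) (ht : BigStep t k) : BigStep u k := by
  induction ht using BigStep.headStep_induction generalizing u with
  | nf ht => exact .nf (h.hnf_forward ht)
  | headStep hstep _ ih =>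
    obtain ⟨rfl, h'⟩ | ⟨u', hu', h'⟩ := h.headStep_forward hstep
    exacts [ih h', (ih h').headStep hu']

theorem bigStep_backward (h : SilentStd t u) (hu : BigStep u k) : BigStep t k := by
  induction hu using BigStep.headStep_induction generalizing t with
  | nf hu =>
    obtain ⟨s, hsteps, hs⟩ := h.hnf_backward hu
    exact (BigStep.nf hs).silentHeadSteps hsteps
  | headStep hstep _ ih =>
    obtain ⟨s, t', hsteps, hs, h'⟩ := h.headStep_backward hstep
    exact ((ih h').headStep hs).silentHeadSteps hsteps

end SilentStd

/-! ### The interaction preorder -/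

/-- Composition of checkers contexts: the second one is plugged into the hole of the first. -/
def CCtx.comp : CCtx → CCtx → CCtx
  | .hole, D => D
  | .lam p C, D => .lam p (C.comp D)
  | .appL p C u, D => .appL p (C.comp D) u
  | .appR p s C, D => .appR p s (C.comp D)

theorem CCtx.fill_comp (C D : CCtx) (t : CTerm) : (C.comp D).fill t = C.fill (D.fill t) := by
  induction C with
  | hole => rfl
  | lam p C ih => simp only [comp, fill, ih]
  | appL p C u ih => simp only [comp, fill, ih]
  | appR p s C ih => simp only [comp, fill, ih]

theorem LCtx.tag_fill (C : LCtx) (t : Lam) (p : Player) :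
    (C.fill t).tag p = (C.tag p).fill (t.tag p) := by
  induction C with
  | hole => rfl
  | lam C ih => simp only [fill, tag, CCtx.fill, Lam.tag, ih]
  | appL C u ih => simp only [fill, tag, CCtx.fill, Lam.tag, ih]
  | appR s C ih => simp only [fill, tag, CCtx.fill, Lam.tag, ih]

theorem CFull.fill {R : CTerm → CTerm → Prop} {t u : CTerm} (h : CFull R t u) (C : CCtx) :
    CFull R (C.fill t) (C.fill u) := by
  induction C with
  | hole => exact h
  | lam p _ ih => exact .lam p ih
  | appL p _ u ih => exact .appL p u ih
  | appR p s _ ih => exact .appR p s ih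

namespace IntCtxLe

variable {t u v : CTerm}

@[refl]
protected theorem refl (t : CTerm) : IntCtxLe t t := fun _ _ => id

protected theorem trans (h : IntCtxLe t u) (h' : IntCtxLe u v) : IntCtxLe t v :=
  fun C k => h' C k ∘ h C k

protected theorem fill (h : IntCtxLe t u) (D : CCtx) : IntCtxLe (D.fill t) (D.fill u) := by
  intro C k
  simpa only [CCtx.fill_comp] using h (C.comp D) k

theorem of_silentConv (h : SilentConv t u) : IntCtxLe t u := by
  induction h with
  | refl => exact .refl t
  | tail _ h ih =>
    refine ih.trans fun C k => ?_
    obtain h | h := h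
    · exact (SilentStd.of_stepTau (h.fill C)).bigStep_forward
    · exact (SilentStd.of_stepTau (h.fill C)).bigStep_backward

end IntCtxLe

theorem SilentConv.symm {t u : CTerm} (h : SilentConv t u) : SilentConv u t :=
  have : Std.Symm fun a b => StepTau a b ∨ StepTau b a := ⟨fun _ _ => Or.symm⟩
  Relation.ReflTransGen.stdSymm.symm t u h

/-! ### Interaction equivalence -/

theorem LBeta.stepTau_tag {t u : Lam} (h : LBeta t u) (p : Player) :
    StepTau (t.tag p) (u.tag p) := by
  induction h with
  | root h =>
    obtain ⟨t, u⟩ := h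
    rw [Lam.tag_subst]
    exact .root (.beta p _ _)
  | lam _ ih => exact .lam p ih
  | appL _ _ ih => exact .appL p _ ih
  | appR _ _ ih => exact .appR p _ ih

theorem LBetaConv.silentConv_tag {t u : Lam} (h : LBetaConv t u) (p : Player) :
    SilentConv (t.tag p) (u.tag p) :=
  h.lift (Lam.tag · p) fun _ _ => .imp (LBeta.stepTau_tag · p) (LBeta.stepTau_tag · p)

namespace IntEq

variable {t u v : Lam}

@[refl]
protected theorem refl (t : Lam) : IntEq t t := ⟨.refl _, .refl _⟩

@[symm]
protected theorem symm (h : IntEq t u) : IntEq u t := And.symm h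

protected theorem trans (h : IntEq t u) (h' : IntEq u v) : IntEq t v :=
  ⟨IntCtxLe.trans h.1 h'.1, IntCtxLe.trans h'.2 h.2⟩

protected theorem fill (h : IntEq t u) (C : LCtx) : IntEq (C.fill t) (C.fill u) := by
  rw [IntEq, IntLe, IntLe, LCtx.tag_fill, LCtx.tag_fill]
  exact ⟨IntCtxLe.fill h.1 _, IntCtxLe.fill h.2 _⟩

theorem of_lBetaConv (h : LBetaConv t u) : IntEq t u :=
  have hsilent := h.silentConv_tag .black
  ⟨.of_silentConv hsilent, .of_silentConv hsilent.symm⟩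

end IntEq

theorem LEtaConv.eta (t : Lam) : LEtaConv (.lam (.app (t.liftAt 0) (.var 0))) t :=
  .single (.inl (.root (.eta t)))

theorem not_intEq_eta_var (n : ℕ) :
    ¬ IntEq (.lam (.app ((Lam.var n).liftAt 0) (.var 0))) (.var n) := by
  intro h
  let C : CCtx := .appL .white .hole (.var 0)
  have hvar : BigStep (C.fill ((Lam.var n).tag .black)) 0 :=
    .nf (Neutral.app .white (.var 0) (.var n)).hnf
  have heta : BigStep (C.fill ((Lam.lam (.app ((Lam.var n).liftAt 0) (.var 0))).tag .black)) 0 :=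
    h.2 C 0 hvar
  have hinter : 1 ≤ 0 := heta.cost_le (.spine (.root (.beta _ _ rfl)))
  exact Nat.not_succ_le_zero 0 hinter

/-- Interaction equivalence `≡int` is a consistent λ-theory: a compatible equivalence
containing β-conversion and different from the total relation; moreover it is not
extensional (it does not contain η-conversion). -/
theorem intEq_consistent_lambda_theory :
    (∀ t, IntEq t t) ∧
    (∀ t u, IntEq t u → IntEq u t) ∧
    (∀ t u s, IntEq t u → IntEq u s → IntEq t s) ∧
    (∀ t u, IntEq t u → ∀ C : LCtx, IntEq (C.fill t) (C.fill u)) ∧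
    (∀ t u, LBetaConv t u → IntEq t u) ∧
    (∃ t u, ¬ IntEq t u) ∧
    (∃ t u, LEtaConv t u ∧ ¬ IntEq t u) := by
  refine ⟨IntEq.refl, fun _ _ => IntEq.symm, fun _ _ _ => IntEq.trans, fun _ _ => IntEq.fill,
    fun _ _ => IntEq.of_lBetaConv, ?_, ?_⟩
  · exact ⟨_, _, not_intEq_eta_var 0⟩
  · exact ⟨_, _, LEtaConv.eta (.var 0), not_intEq_eta_var 0⟩
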